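/- Let p > 1 and a, b, L > 0. A real number λ is a Dirichlet eigenvalue of −Δ^{a,b}_p on (0,L), i.e. λ ∈ Λ^{a,b}_p(0,L), if and only if there exists a positive integer k such that λ = k^p · λ^{a,b}_{1,p}(0,L). In particular Λ^{a,b}_p(0,L) = ((a+b)/2)^p · Λ^{1,1}_p(0,L). -/

import Mathlib

open Set

/-- `u` is C¹ on `[α, γ]` with derivative `u'` there. -/
def C1On (α γ : ℝ) (u u' : ℝ → ℝ) : Prop :=
  (∀ t ∈ Set.Icc α γ, HasDerivWithinAt u (u' t) (Set.Icc α γ) t) ∧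
  ContinuousOn u' (Set.Icc α γ)

/-- Admissible functions on `[0, L]`: C¹ with zero boundary values. -/
def Adm (L : ℝ) (u u' : ℝ → ℝ) : Prop :=
  C1On 0 L u u' ∧ u 0 = 0 ∧ u L = 0

/-- The asymmetric energy integrand `a^p (s⁺)^p + b^p (s⁻)^p`. -/
noncomputable def asymE (p a b s : ℝ) : ℝ :=
  a ^ p * (max s 0) ^ p + b ^ p * (max (-s) 0) ^ p

/-- The asymmetric flux `a^p (s⁺)^(p-1) - b^p (s⁻)^(p-1)`. -/
noncomputable def asymFlux (p a b s : ℝ) : ℝ :=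
  a ^ p * (max s 0) ^ (p - 1) - b ^ p * (max (-s) 0) ^ (p - 1)

/-- The first Dirichlet eigenvalue `λ^{a,b}_{1,p}(0,L)`, as the infimum of the
asymmetric energy over normalized admissible functions. -/
noncomputable def lam1 (p a b L : ℝ) : ℝ :=
  sInf { E : ℝ | ∃ u u' : ℝ → ℝ, Adm L u u' ∧
    (∫ t in (0:ℝ)..L, |u t| ^ p) = 1 ∧
    E = ∫ t in (0:ℝ)..L, asymE p a b (u' t) }

/-- `u` (a C¹ function on `[0,L]` with derivative `u'` and zero boundary values)
is a weak solution of `-Δ^{a,b}_p u = g` on `(0,L)`. -/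
def IsWeakSol (p a b L : ℝ) (u u' g : ℝ → ℝ) : Prop :=
  Adm L u u' ∧
  ∀ φ φ' : ℝ → ℝ, Adm L φ φ' →
    (∫ t in (0:ℝ)..L, asymFlux p a b (u' t) * φ' t) =
      ∫ t in (0:ℝ)..L, g t * φ t

/-- `lam` is a Dirichlet eigenvalue of `-Δ^{a,b}_p` on `(0,L)`. -/
def DirichletEig (p a b L lam : ℝ) : Prop :=
  ∃ u u' : ℝ → ℝ, IsWeakSol p a b L u u'
      (fun t => lam * |u t| ^ (p - 2) * u t) ∧
    ∃ t ∈ Set.Icc (0:ℝ) L, u t ≠ 0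



lemma hasDerivAt_pospart (p : ℝ) (hp : 1 < p) (s : ℝ) :
    HasDerivAt (fun s : ℝ => (max s 0) ^ p) (p * (max s 0) ^ (p - 1)) s := by
  have hne : ∀ y : ℝ, y ≠ 0 →
      HasDerivAt (fun s : ℝ => (max s 0) ^ p) (p * (max y 0) ^ (p - 1)) y := by
    intro y hy
    rcases lt_or_gt_of_ne hy with h | h
    · have e : (fun s : ℝ => (max s 0) ^ p) =ᶠ[nhds y] fun _ => 0 := by
        filter_upwards [Iio_mem_nhds h] with z hz
        rw [max_eq_right (le_of_lt hz), Real.zero_rpow (by linarith)]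
      rw [max_eq_right h.le, Real.zero_rpow (by linarith), mul_zero]
      exact (hasDerivAt_const y (0:ℝ)).congr_of_eventuallyEq e
    · have e : (fun s : ℝ => (max s 0) ^ p) =ᶠ[nhds y] fun s => s ^ p := by
        filter_upwards [Ioi_mem_nhds h] with z hz
        rw [max_eq_left (le_of_lt hz)]
      rw [max_eq_left h.le]
      exact (Real.hasDerivAt_rpow_const (Or.inl hy)).congr_of_eventuallyEq e
  by_cases hs : s = 0
  · subst hs
    have c1 : Continuous (fun s : ℝ => (max s 0) ^ p) :=
      (continuous_id.max continuous_const).rpow_const (fun _ => Or.inr (by linarith))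
    have c2 : Continuous (fun s : ℝ => p * (max s 0) ^ (p - 1)) :=
      continuous_const.mul
        ((continuous_id.max continuous_const).rpow_const (fun _ => Or.inr (by linarith)))
    exact hasDerivAt_of_hasDerivAt_of_ne hne c1.continuousAt c2.continuousAt
  · exact hne s hs

lemma asymE_hasDerivAt (p a b : ℝ) (hp : 1 < p) (s : ℝ) :
    HasDerivAt (asymE p a b) (p * asymFlux p a b s) s := by
  have h1 := (hasDerivAt_pospart p hp s).const_mul (a ^ p)
  have h2 := ((hasDerivAt_pospart p hp (-s)).comp s (hasDerivAt_neg s)).const_mul (b ^ p)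
  have h3 := h1.add h2
  unfold asymE asymFlux
  refine h3.congr_deriv ?_
  ring

lemma asymFlux_continuous (p a b : ℝ) (hp : 1 < p) : Continuous (asymFlux p a b) := by
  unfold asymFlux
  have h : ∀ s : ℝ, 0 ≤ p - 1 := fun _ => by linarith
  exact (continuous_const.mul
    ((continuous_id.max continuous_const).rpow_const (fun s => Or.inr (h s)))).sub
    (continuous_const.mul
    ((continuous_neg.max continuous_const).rpow_const (fun s => Or.inr (h s))))

lemma asymE_continuous (p a b : ℝ) (hp : 1 < p) : Continuous (asymE p a b) :=
  continuous_iff_continuousAt.2 fun s => (asymE_hasDerivAt p a b hp s).continuousAt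

lemma asymFlux_pos (p a b s : ℝ) (hp : 1 < p) (hs : 0 ≤ s) :
    asymFlux p a b s = a ^ p * s ^ (p - 1) := by
  unfold asymFlux
  rw [max_eq_left hs, max_eq_right (by linarith), Real.zero_rpow (by linarith)]; ring

lemma asymE_pos (p a b s : ℝ) (hp : 1 < p) (hs : 0 ≤ s) :
    asymE p a b s = a ^ p * s ^ p := by
  unfold asymE
  rw [max_eq_left hs, max_eq_right (by linarith), Real.zero_rpow (by linarith)]; ring

lemma asymFlux_neg (p a b s : ℝ) : asymFlux p a b (-s) = - asymFlux p b a s := by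
  unfold asymFlux
  rw [neg_neg]; ring

lemma asymE_neg (p a b s : ℝ) : asymE p a b (-s) = asymE p b a s := by
  unfold asymE
  rw [neg_neg]; ring

lemma asymE_nonneg (p a b s : ℝ) (ha : 0 < a) (hb : 0 < b) : 0 ≤ asymE p a b s := by
  unfold asymE
  have h1 : 0 ≤ max s 0 := le_max_right _ _
  have h2 : 0 ≤ max (-s) 0 := le_max_right _ _
  positivity

lemma asymFlux_mul (p a b s : ℝ) (hp : 1 < p) : asymFlux p a b s * s = asymE p a b s := by
  have key : ∀ a b s : ℝ, 0 ≤ s → asymFlux p a b s * s = asymE p a b s := by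
    intro a b s hs
    rw [asymFlux_pos p a b s hp hs, asymE_pos p a b s hp hs, mul_assoc]
    congr 1
    rcases hs.eq_or_lt with h | h
    · rw [← h, mul_zero, Real.zero_rpow (by linarith)]
    · rw [Real.rpow_sub_one h.ne']; field_simp
  rcases le_total 0 s with hs | hs
  · exact key a b s hs
  · have := key b a (-s) (by linarith)
    rw [asymFlux_neg, asymE_neg] at this
    linarith

lemma abs_rpow_eq (p s : ℝ) (hp : 1 < p) : |s| ^ p = asymE p 1 1 s := by
  rcases le_total 0 s with hs | hs
  · rw [asymE_pos p 1 1 s hp hs, abs_of_nonneg hs]; simp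
  · rw [← neg_neg s, asymE_neg, asymE_pos p 1 1 (-s) hp (by linarith), abs_neg,
      abs_of_nonneg (by linarith)]; simp

lemma f_pos (p s : ℝ) (hp : 1 < p) (hs : 0 ≤ s) : |s| ^ (p - 2) * s = s ^ (p - 1) := by
  rw [abs_of_nonneg hs]
  rcases hs.eq_or_lt with h | h
  · rw [← h, mul_zero, Real.zero_rpow (by linarith)]
  · rw [← Real.rpow_add_one h.ne']; congr 1; ring

lemma f_eq (p s : ℝ) (hp : 1 < p) : |s| ^ (p - 2) * s = asymFlux p 1 1 s := by
  rcases le_total 0 s with hs | hs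
  · rw [asymFlux_pos p 1 1 s hp hs, f_pos p s hp hs]; simp
  · have := f_pos p (-s) hp (by linarith)
    rw [abs_neg] at this
    rw [← neg_neg s, asymFlux_neg, asymFlux_pos p 1 1 (-s) hp (by linarith), abs_neg]
    simp at this ⊢; linarith

lemma flux_dual (p q a b s : ℝ) (hp : 1 < p) (hq : q = p / (p - 1)) (ha : 0 < a) (hb : 0 < b) :
    asymFlux q a⁻¹ b⁻¹ (asymFlux p a b s) = s := by
  have hp1 : p - 1 ≠ 0 := by linarith
  have hq1 : 1 < q := by rw [hq, lt_div_iff₀ (by linarith)]; linarith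
  have key : ∀ a b s : ℝ, 0 < a → 0 < b → 0 ≤ s → 
      asymFlux q a⁻¹ b⁻¹ (asymFlux p a b s) = s := by
    intro a b s ha hb hs
    rw [asymFlux_pos p a b s hp hs, asymFlux_pos q _ _ _ hq1 (by positivity),
      Real.mul_rpow (by positivity) (by positivity), ← Real.rpow_mul ha.le, ← Real.rpow_mul hs,
      Real.inv_rpow ha.le]
    have e1 : p * (q - 1) = q := by rw [hq]; field_simp; ring
    have e2 : (p - 1) * (q - 1) = 1 := by rw [hq]; field_simp; ring
    rw [e1, e2, Real.rpow_one]
    have : a ^ q ≠ 0 := by positivity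
    field_simp
  rcases le_total 0 s with hs | hs
  · exact key a b s ha hb hs
  · have := key b a (-s) hb ha (by linarith)
    rw [asymFlux_neg, asymFlux_neg] at this
    linarith

lemma E_dual (p q a b s : ℝ) (hp : 1 < p) (hq : q = p / (p - 1)) (ha : 0 < a) (hb : 0 < b) :
    asymE q a⁻¹ b⁻¹ (asymFlux p a b s) = asymE p a b s := by
  have hq1 : 1 < q := by rw [hq, lt_div_iff₀ (by linarith)]; linarith
  rw [← asymFlux_mul q _ _ _ hq1, flux_dual p q a b s hp hq ha hb, ← asymFlux_mul p a b s hp]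
  ring

lemma young_basic (p x y : ℝ) (hp : 1 < p) (hx : 0 ≤ x) (hy : 0 ≤ y) :
    p * (y ^ (p - 1) * x) ≤ x ^ p + (p - 1) * y ^ p := by
  have hc := Real.HolderConjugate.conjExponent hp
  have h := Real.young_inequality_of_nonneg hx (Real.rpow_nonneg hy (p - 1)) hc
  have e : (y ^ (p - 1)) ^ (Real.conjExponent p) = y ^ p := by
    rw [← Real.rpow_mul hy]; congr 1; unfold Real.conjExponent
    have : p - 1 ≠ 0 := by linarith
    field_simp
  rw [e] at h
  unfold Real.conjExponent at h
  have hp0 : 0 < p := by linarith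
  have h2 := mul_le_mul_of_nonneg_left h hp0.le
  have : p * (x ^ p / p + y ^ p / (p / (p - 1))) = x ^ p + (p - 1) * y ^ p := by
    have : p - 1 ≠ 0 := by linarith
    field_simp
  linarith

lemma young_asym (p a b x y : ℝ) (hp : 1 < p) (ha : 0 < a) (hb : 0 < b) :
    p * (asymFlux p a b y * x) ≤ asymE p a b x + (p - 1) * asymE p a b y := by
  have key : ∀ a b x y : ℝ, 0 < a → 0 < b → 0 ≤ y →
      p * (asymFlux p a b y * x) ≤ asymE p a b x + (p - 1) * asymE p a b y := by
    intro a b x y ha hb hy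
    have hE := asymE_nonneg p a b x ha hb
    rw [asymFlux_pos p a b y hp hy, asymE_pos p a b y hp hy]
    rcases le_total 0 x with hx | hx
    · rw [asymE_pos p a b x hp hx]
      have := mul_le_mul_of_nonneg_left (young_basic p x y hp hx hy)
        (Real.rpow_nonneg ha.le p)
      linarith
    · have h1 : 0 ≤ a ^ p * y ^ (p - 1) := by positivity
      have h2 : 0 ≤ a ^ p * y ^ p := by positivity
      have h3 : a ^ p * y ^ (p - 1) * x ≤ 0 := mul_nonpos_of_nonneg_of_nonpos h1 hx
      nlinarith
  rcases le_total 0 y with hy | hy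
  · exact key a b x y ha hb hy
  · have := key b a (-x) (-y) hb ha (by linarith)
    rw [asymFlux_neg, asymE_neg, asymE_neg] at this
    linarith

lemma asymFlux_pos_iff (p a b s : ℝ) (hp : 1 < p) (ha : 0 < a) (hb : 0 < b) :
    0 < asymFlux p a b s ↔ 0 < s := by
  constructor
  · intro h
    by_contra hs
    have hs : 0 ≤ -s := by linarith
    have := asymFlux_neg p a b (-s)
    rw [neg_neg, asymFlux_pos p b a (-s) hp hs] at this
    have : 0 ≤ b ^ p * (-s) ^ (p - 1) := by positivity
    linarith
  · intro h
    rw [asymFlux_pos p a b s hp h.le]; positivity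

lemma asymFlux_neg_iff (p a b s : ℝ) (hp : 1 < p) (ha : 0 < a) (hb : 0 < b) :
    asymFlux p a b s < 0 ↔ s < 0 := by
  have := asymFlux_pos_iff p b a (-s) hp hb ha
  rw [asymFlux_neg] at this
  constructor <;> intro h
  · have := this.1 (by linarith); linarith
  · have := this.2 (by linarith); linarith

lemma asymFlux_zero (p a b : ℝ) (hp : 1 < p) : asymFlux p a b 0 = 0 := by
  rw [asymFlux_pos p a b 0 hp le_rfl, Real.zero_rpow (by linarith), mul_zero]

lemma asymE_eq_zero (p a b s : ℝ) (hp : 1 < p) (ha : 0 < a) (hb : 0 < b)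
    (h : asymE p a b s = 0) : s = 0 := by
  rw [← asymFlux_mul p a b s hp] at h
  rcases mul_eq_zero.1 h with h | h
  · rcases lt_trichotomy s 0 with h' | h' | h'
    · have := (asymFlux_neg_iff p a b s hp ha hb).2 h'; linarith
    · exact h'
    · have := (asymFlux_pos_iff p a b s hp ha hb).2 h'; linarith
  · exact h


lemma C1On.continuousOn {α γ : ℝ} {u u' : ℝ → ℝ} (h : C1On α γ u u') :
    ContinuousOn u (Icc α γ) := fun t ht => (h.1 t ht).continuousWithinAt

lemma C1On.hasDerivAt {α γ : ℝ} {u u' : ℝ → ℝ} (h : C1On α γ u u') {t : ℝ} (ht : t ∈ Ioo α γ) :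
    HasDerivAt u (u' t) t :=
  (h.1 t (Ioo_subset_Icc_self ht)).hasDerivAt (Icc_mem_nhds ht.1 ht.2)

lemma C1On_prim {α γ : ℝ} {g : ℝ → ℝ} (hg : ContinuousOn g (Icc α γ)) :
    C1On α γ (fun t => ∫ s in α..t, g s) g := by
  refine ⟨fun t ht => ?_, hg⟩
  have : Fact (t ∈ Icc α γ) := ⟨ht⟩
  refine intervalIntegral.integral_hasDerivWithinAt_right ?_ (s := Icc α γ) (t := Icc α γ) ?_ (hg t ht)
  · refine ContinuousOn.intervalIntegrable ?_
    rw [uIcc_of_le ht.1]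
    exact hg.mono (Icc_subset_Icc le_rfl ht.2)
  · exact hg.stronglyMeasurableAtFilter_nhdsWithin measurableSet_Icc t

lemma C1On_of_countable {α γ : ℝ} (hαγ : α ≤ γ) {u u' : ℝ → ℝ} {s : Set ℝ} (hs : s.Countable)
    (hu : ContinuousOn u (Icc α γ)) (hu' : ContinuousOn u' (Icc α γ))
    (hd : ∀ t ∈ Ioo α γ \ s, HasDerivAt u (u' t) t) : C1On α γ u u' := by
  have key : ∀ t ∈ Icc α γ, u t = u α + ∫ s in α..t, u' s := by
    intro t ht
    have hsub : Icc α t ⊆ Icc α γ := Icc_subset_Icc le_rfl ht.2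
    rw [MeasureTheory.integral_eq_of_hasDerivAt_off_countable_of_le u u' ht.1 hs (hu.mono hsub)
      (fun x hx => hd x ⟨⟨hx.1.1, lt_of_lt_of_le hx.1.2 ht.2⟩, hx.2⟩)]
    · ring
    · refine ContinuousOn.intervalIntegrable ?_
      rw [uIcc_of_le ht.1]
      exact hu'.mono hsub
  have := C1On_prim hu'
  refine ⟨fun t ht => ?_, hu'⟩
  exact ((this.1 t ht).const_add (u α)).congr (fun x hx => key x hx) (key t ht)

lemma C1On.congr {α γ : ℝ} {u u' v v' : ℝ → ℝ} (h : C1On α γ u u')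
    (h1 : ∀ t ∈ Icc α γ, v t = u t) (h2 : ∀ t ∈ Icc α γ, v' t = u' t) : C1On α γ v v' := by
  refine ⟨fun t ht => ?_, h.2.congr h2⟩
  rw [h2 t ht]
  exact (h.1 t ht).congr h1 (h1 t ht)

lemma C1On.mono {α γ α' γ' : ℝ} {u u' : ℝ → ℝ} (h : C1On α γ u u') (h1 : α ≤ α') (h2 : γ' ≤ γ) :
    C1On α' γ' u u' :=
  ⟨fun t ht => (h.1 t (Icc_subset_Icc h1 h2 ht)).mono (Icc_subset_Icc h1 h2),
    h.2.mono (Icc_subset_Icc h1 h2)⟩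

lemma C1On.shift {α γ : ℝ} {u u' : ℝ → ℝ} (h : C1On α γ u u') (c : ℝ) :
    C1On (α + c) (γ + c) (fun t => u (t - c)) (fun t => u' (t - c)) := by
  have hm : MapsTo (fun t => t - c) (Icc (α + c) (γ + c)) (Icc α γ) := by
    intro t ht; constructor <;> [linarith [ht.1]; linarith [ht.2]]
  refine ⟨fun t ht => ?_, h.2.comp (by fun_prop) hm⟩
  have := (h.1 (t - c) (hm ht)).comp t ((hasDerivAt_id t).sub_const c).hasDerivWithinAt hm
  rw [mul_one] at this
  exact this

lemma C1On.reflect {α γ : ℝ} {u u' : ℝ → ℝ} (h : C1On α γ u u') (c : ℝ) :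
    C1On (c - γ) (c - α) (fun t => u (c - t)) (fun t => -u' (c - t)) := by
  have hm : MapsTo (fun t => c - t) (Icc (c - γ) (c - α)) (Icc α γ) := by
    intro t ht; constructor <;> [linarith [ht.2]; linarith [ht.1]]
  refine ⟨fun t ht => ?_, (h.2.comp (by fun_prop) hm).neg⟩
  have := (h.1 (c - t) (hm ht)).comp t ((hasDerivAt_id t).const_sub c).hasDerivWithinAt hm
  rw [mul_neg, mul_one] at this
  exact this

lemma C1On.neg {α γ : ℝ} {u u' : ℝ → ℝ} (h : C1On α γ u u') :
    C1On α γ (fun t => -u t) (fun t => -u' t) :=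
  ⟨fun t ht => (h.1 t ht).neg, h.2.neg⟩

lemma C1On.glue {α β γ : ℝ} {u u' v v' : ℝ → ℝ} (h1 : α ≤ β) (h2 : β ≤ γ)
    (hu : C1On α β u u') (hv : C1On β γ v v') (e : u β = v β) (e' : u' β = v' β) :
    C1On α γ (fun t => if t ≤ β then u t else v t) (fun t => if t ≤ β then u' t else v' t) := by
  have cont : ∀ f g : ℝ → ℝ, ContinuousOn f (Icc α β) → ContinuousOn g (Icc β γ) → f β = g β →
      ContinuousOn (fun t => if t ≤ β then f t else g t) (Icc α γ) := by
    intro f g hf hg hfg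
    rw [← Icc_union_Icc_eq_Icc h1 h2]
    refine ContinuousOn.union_of_isClosed ?_ ?_ isClosed_Icc isClosed_Icc
    · exact hf.congr fun t ht => if_pos ht.2
    · refine hg.congr fun t ht => ?_
      by_cases h : t ≤ β
      · have : t = β := le_antisymm h ht.1
        subst this
        simp [hfg]
      · simp [h]
  refine C1On_of_countable (h1.trans h2) (countable_singleton β) (cont u v hu.continuousOn hv.continuousOn e)
    (cont u' v' hu.2 hv.2 e') ?_
  rintro t ⟨ht, htβ⟩
  rcases lt_or_gt_of_ne (show t ≠ β from htβ) with h | h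
  · rw [if_pos h.le]
    refine (hu.hasDerivAt ⟨ht.1, h⟩).congr_of_eventuallyEq ?_
    filter_upwards [Iio_mem_nhds h] with x hx
    exact if_pos (le_of_lt hx)
  · rw [if_neg (not_le.2 h)]
    refine (hv.hasDerivAt ⟨h, ht.2⟩).congr_of_eventuallyEq ?_
    filter_upwards [Ioi_mem_nhds h] with x hx
    exact if_neg (not_le.2 hx)

lemma C1On.integral_eq {α γ : ℝ} {u u' : ℝ → ℝ} (hαγ : α ≤ γ) (h : C1On α γ u u') :
    ∫ t in α..γ, u' t = u γ - u α :=
  intervalIntegral.integral_eq_sub_of_hasDerivAt_of_le hαγ h.continuousOn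
    (fun _ ht => h.hasDerivAt ht)
    (ContinuousOn.intervalIntegrable (by rw [uIcc_of_le hαγ]; exact h.2))

lemma C1On.mul {α γ : ℝ} {u u' v v' : ℝ → ℝ} (hu : C1On α γ u u') (hv : C1On α γ v v') :
    C1On α γ (fun t => u t * v t) (fun t => u' t * v t + u t * v' t) :=
  ⟨fun t ht => (hu.1 t ht).mul (hv.1 t ht),
    (hu.2.mul hv.continuousOn).add (hu.continuousOn.mul hv.2)⟩


/-- Strong solutions on `[α, β]`: the flux is C¹ and satisfies the equation. -/
def SSol (p a b lam α β : ℝ) (u u' : ℝ → ℝ) : Prop :=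
  C1On α β u u' ∧
  C1On α β (fun t => asymFlux p a b (u' t)) (fun t => -(lam * asymFlux p 1 1 (u t)))

lemma SSol.mono {p a b lam α β α' β' : ℝ} {u u' : ℝ → ℝ} (h : SSol p a b lam α β u u')
    (h1 : α ≤ α') (h2 : β' ≤ β) : SSol p a b lam α' β' u u' :=
  ⟨h.1.mono h1 h2, h.2.mono h1 h2⟩

lemma SSol.shift {p a b lam α β : ℝ} {u u' : ℝ → ℝ} (h : SSol p a b lam α β u u') (c : ℝ) :
    SSol p a b lam (α + c) (β + c) (fun t => u (t - c)) (fun t => u' (t - c)) :=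
  ⟨h.1.shift c, h.2.shift c⟩

lemma SSol.reflect {p a b lam α β : ℝ} {u u' : ℝ → ℝ} (h : SSol p a b lam α β u u') (c : ℝ) :
    SSol p b a lam (c - β) (c - α) (fun t => u (c - t)) (fun t => -u' (c - t)) := by
  refine ⟨h.1.reflect c, (h.2.reflect c).neg.congr ?_ ?_⟩
  · intro t _
    exact asymFlux_neg p b a _
  · intro t _
    simp

lemma SSol.neg {p a b lam α β : ℝ} {u u' : ℝ → ℝ} (h : SSol p a b lam α β u u') :
    SSol p b a lam α β (fun t => -u t) (fun t => -u' t) := by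
  refine ⟨h.1.neg, h.2.neg.congr ?_ ?_⟩
  · intro t _
    exact asymFlux_neg p b a _
  · intro t _
    simp only [asymFlux_neg]; ring

lemma SSol.glue {p a b lam α β γ : ℝ} {u u' v v' : ℝ → ℝ} (h1 : α ≤ β) (h2 : β ≤ γ)
    (hu : SSol p a b lam α β u u') (hv : SSol p a b lam β γ v v') (e : u β = v β)
    (e' : u' β = v' β) :
    SSol p a b lam α γ (fun t => if t ≤ β then u t else v t)
      (fun t => if t ≤ β then u' t else v' t) := by
  refine ⟨hu.1.glue h1 h2 hv.1 e e', (hu.2.glue h1 h2 hv.2 (by rw [e']) (by rw [e])).congr ?_ ?_⟩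
  · intro t _
    by_cases h : t ≤ β <;> simp [h]
  · intro t _
    by_cases h : t ≤ β <;> simp [h]

lemma SSol.energy {p a b lam α β : ℝ} {u u' : ℝ → ℝ} (hp : 1 < p) (ha : 0 < a) (hb : 0 < b)
    (h : SSol p a b lam α β u u') {s t : ℝ} (hs : s ∈ Icc α β) (ht : t ∈ Icc α β) :
    (p - 1) * asymE p a b (u' s) + lam * asymE p 1 1 (u s) =
      (p - 1) * asymE p a b (u' t) + lam * asymE p 1 1 (u t) := by
  obtain ⟨q, hq⟩ : ∃ q, q = p / (p - 1) := ⟨_, rfl⟩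
  have hq1 : 1 < q := by rw [hq, lt_div_iff₀ (by linarith)]; linarith
  have hd : ∀ t ∈ Icc α β, HasDerivWithinAt
      (fun t => (p - 1) * asymE p a b (u' t) + lam * asymE p 1 1 (u t)) 0 (Icc α β) t := by
    intro t ht
    have h1 := (asymE_hasDerivAt q a⁻¹ b⁻¹ hq1 (asymFlux p a b (u' t))).comp_hasDerivWithinAt t
      (h.2.1 t ht)
    have h2 := (asymE_hasDerivAt p 1 1 hp (u t)).comp_hasDerivWithinAt t (h.1.1 t ht)
    have h3 := (h1.const_mul (p - 1)).add (h2.const_mul lam)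
    rw [flux_dual p q a b _ hp hq ha hb] at h3
    have e : (p - 1) * (q * u' t * -(lam * asymFlux p 1 1 (u t))) +
      lam * (p * asymFlux p 1 1 (u t) * u' t) = 0 := by
      have : (p - 1) * q = p := by rw [hq]; field_simp [show p - 1 ≠ 0 by linarith]
      linear_combination (-u' t * lam * asymFlux p 1 1 (u t)) * this
    rw [e] at h3
    refine h3.congr ?_ ?_
    · intro x _
      simp [E_dual p q a b _ hp hq ha hb]
    · simp [E_dual p q a b _ hp hq ha hb]
  have hc : ∀ x ∈ Icc α β, (fun t => (p - 1) * asymE p a b (u' t) + lam * asymE p 1 1 (u t)) x =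
      (fun t => (p - 1) * asymE p a b (u' t) + lam * asymE p 1 1 (u t)) α := by
    refine constant_of_has_deriv_right_zero (fun t ht => (hd t ht).continuousWithinAt) ?_
    intro t ht
    exact (hd t (Ico_subset_Icc_self ht)).mono_of_mem_nhdsWithin
      (Icc_mem_nhdsGE_of_mem ht)
  exact (hc s hs).trans (hc t ht).symm

lemma SSol.weak {p a b lam L : ℝ} {u u' : ℝ → ℝ} (hL : 0 < L) (hp : 1 < p)
    (h : SSol p a b lam 0 L u u') (h0 : u 0 = 0) (h1 : u L = 0) :
    IsWeakSol p a b L u u' (fun t => lam * |u t| ^ (p - 2) * u t) := by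
  refine ⟨⟨h.1, h0, h1⟩, fun φ φ' hφ => ?_⟩
  have hm := (h.2.mul hφ.1).integral_eq hL.le
  rw [hφ.2.1, hφ.2.2, mul_zero, mul_zero, sub_zero] at hm
  have hci : ∀ f : ℝ → ℝ, ContinuousOn f (Icc 0 L) →
      IntervalIntegrable f MeasureTheory.volume 0 L := fun f hf =>
    ContinuousOn.intervalIntegrable (by rwa [uIcc_of_le hL.le])
  rw [intervalIntegral.integral_add (hci _ (h.2.2.fun_mul hφ.1.continuousOn))
    (hci _ (h.2.continuousOn.fun_mul hφ.1.2))] at hm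
  have e : (∫ t in (0:ℝ)..L, -(lam * asymFlux p 1 1 (u t)) * φ t) =
      -∫ t in (0:ℝ)..L, lam * |u t| ^ (p - 2) * u t * φ t := by
    rw [← intervalIntegral.integral_neg]
    congr 1
    funext t
    rw [mul_assoc lam, f_eq p _ hp]; ring
  rw [e] at hm
  linarith

lemma weak_strong {p a b lam L : ℝ} {u u' : ℝ → ℝ} (hL : 0 < L) (hp : 1 < p)
    (h : IsWeakSol p a b L u u' (fun t => lam * |u t| ^ (p - 2) * u t)) :
    SSol p a b lam 0 L u u' := by
  obtain ⟨hA, hw⟩ := h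
  have hci : ∀ f : ℝ → ℝ, ContinuousOn f (Icc 0 L) →
      IntervalIntegrable f MeasureTheory.volume 0 L := fun f hf =>
    ContinuousOn.intervalIntegrable (by rwa [uIcc_of_le hL.le])
  set g : ℝ → ℝ := fun t => lam * asymFlux p 1 1 (u t) with hg
  have hgc : ContinuousOn g (Icc 0 L) :=
    continuousOn_const.mul ((asymFlux_continuous p 1 1 hp).comp_continuousOn hA.1.continuousOn)
  have hWc : ContinuousOn (fun t => asymFlux p a b (u' t)) (Icc 0 L) :=
    (asymFlux_continuous p a b hp).comp_continuousOn hA.1.2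
  set F : ℝ → ℝ := fun t => ∫ s in (0:ℝ)..t, g s with hF
  have hF1 : C1On 0 L F g := C1On_prim hgc
  set W : ℝ → ℝ := fun t => asymFlux p a b (u' t) + F t with hWdef
  have hWcont : ContinuousOn W (Icc 0 L) := hWc.add hF1.continuousOn
  have key : ∀ φ φ' : ℝ → ℝ, Adm L φ φ' → ∫ t in (0:ℝ)..L, W t * φ' t = 0 := by
    intro φ φ' hφ
    have h1 := hw φ φ' hφ
    have hm := (hF1.mul hφ.1).integral_eq hL.le
    rw [hφ.2.1, hφ.2.2, mul_zero, mul_zero, sub_zero] at hm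
    rw [intervalIntegral.integral_add (hci _ (hgc.fun_mul hφ.1.continuousOn))
      (hci _ (hF1.continuousOn.fun_mul hφ.1.2))] at hm
    have e : (∫ t in (0:ℝ)..L, lam * |u t| ^ (p - 2) * u t * φ t) =
        ∫ t in (0:ℝ)..L, g t * φ t := by
      congr 1
      funext t
      rw [mul_assoc lam, f_eq p _ hp]
    simp only at h1
    rw [e] at h1
    have : ∫ t in (0:ℝ)..L, W t * φ' t =
        (∫ t in (0:ℝ)..L, asymFlux p a b (u' t) * φ' t) + ∫ t in (0:ℝ)..L, F t * φ' t := by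
      rw [← intervalIntegral.integral_add (hci _ (hWc.fun_mul hφ.1.2))
        (hci _ (hF1.continuousOn.fun_mul hφ.1.2))]
      congr 1; funext t; simp only [hWdef]; ring
    rw [this]; linarith
  set c : ℝ := (∫ t in (0:ℝ)..L, W t) / L with hc
  have hWcc : ContinuousOn (fun t => W t - c) (Icc 0 L) := hWcont.sub continuousOn_const
  have hI : ∫ t in (0:ℝ)..L, (W t - c) = 0 := by
    rw [intervalIntegral.integral_sub (hci _ hWcont) (by simp), intervalIntegral.integral_const]
    simp only [smul_eq_mul, sub_zero, hc]
    field_simp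
    ring
  have hAd : Adm L (fun t => ∫ s in (0:ℝ)..t, (W s - c)) (fun t => W t - c) :=
    ⟨C1On_prim hWcc, by simp, hI⟩
  have h2 : ∫ t in (0:ℝ)..L, (W t - c) * (W t - c) = 0 := by
    have := key _ _ hAd
    have h3 : ∫ t in (0:ℝ)..L, (W t - c) * (W t - c) =
      (∫ t in (0:ℝ)..L, W t * (W t - c)) - ∫ t in (0:ℝ)..L, c * (W t - c) := by
      rw [← intervalIntegral.integral_sub (hci _ (hWcont.fun_mul hWcc))
        (hci _ (continuousOn_const (c := c) |>.fun_mul hWcc))]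
      congr 1; funext t; ring
    rw [h3, this, intervalIntegral.integral_const_mul, hI]; ring
  have h4 : ∀ t ∈ Icc (0:ℝ) L, W t = c := by
    by_contra hne
    push Not at hne
    obtain ⟨t, ht, hWt⟩ := hne
    have : 0 < ∫ t in (0:ℝ)..L, (W t - c) * (W t - c) := by
      refine intervalIntegral.integral_pos hL (hWcc.mul hWcc) (fun x _ => mul_self_nonneg _)
        ⟨t, ht, ?_⟩
      exact mul_self_pos.2 (sub_ne_zero.2 hWt)
    linarith
  refine ⟨hA.1, ?_⟩
  refine C1On.congr (u := fun t => c - F t) (u' := fun t => -g t) ⟨fun t ht => ?_, hgc.neg⟩ ?_ ?_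
  · simpa using (hF1.1 t ht).const_sub c
  · intro t ht
    have := h4 t ht
    simp only [hWdef] at this
    linarith
  · intro t _; rfl

/-- Testing an eigenfunction with itself. -/
lemma weak_test {p a b lam L : ℝ} {u u' : ℝ → ℝ} (hp : 1 < p)
    (h : IsWeakSol p a b L u u' (fun t => lam * |u t| ^ (p - 2) * u t)) :
    (∫ t in (0:ℝ)..L, asymE p a b (u' t)) = lam * ∫ t in (0:ℝ)..L, |u t| ^ p := by
  have := h.2 u u' h.1
  rw [← intervalIntegral.integral_const_mul]
  have e1 : (∫ t in (0:ℝ)..L, asymFlux p a b (u' t) * u' t) =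
    ∫ t in (0:ℝ)..L, asymE p a b (u' t) := by
    congr 1; funext t; exact asymFlux_mul p a b _ hp
  have e2 : (∫ t in (0:ℝ)..L, lam * |u t| ^ (p - 2) * u t * u t) =
    ∫ t in (0:ℝ)..L, lam * |u t| ^ p := by
    congr 1; funext t
    rw [mul_assoc lam, mul_assoc lam, f_eq p _ hp, asymFlux_mul p 1 1 _ hp, abs_rpow_eq p _ hp]
  rw [← e1, ← e2]
  exact this

lemma eig_norm_pos {p L : ℝ} {u u' : ℝ → ℝ} (hp : 1 < p) (hL : 0 < L) (hu : C1On 0 L u u')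
    (hne : ∃ t ∈ Icc (0:ℝ) L, u t ≠ 0) : 0 < ∫ t in (0:ℝ)..L, |u t| ^ p := by
  obtain ⟨t, ht, hut⟩ := hne
  refine intervalIntegral.integral_pos hL ?_ (fun x _ => by positivity) ⟨t, ht, by positivity⟩
  exact hu.continuousOn.abs.rpow_const (fun _ _ => Or.inr (by linarith))

lemma eig_pos {p a b lam L : ℝ} {u u' : ℝ → ℝ} (hp : 1 < p) (ha : 0 < a) (hb : 0 < b) (hL : 0 < L)
    (h : IsWeakSol p a b L u u' (fun t => lam * |u t| ^ (p - 2) * u t))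
    (hne : ∃ t ∈ Icc (0:ℝ) L, u t ≠ 0) : 0 < lam := by
  have h1 := weak_test hp h
  have h2 := eig_norm_pos hp hL h.1.1 hne
  by_contra hl
  push Not at hl
  have h3 : (∫ t in (0:ℝ)..L, asymE p a b (u' t)) ≤ 0 := by
    rw [h1]; exact mul_nonpos_of_nonpos_of_nonneg hl h2.le
  have h4 : ∀ t ∈ Icc (0:ℝ) L, u' t = 0 := by
    by_contra hh
    push Not at hh
    obtain ⟨t, ht, hut⟩ := hh
    have : 0 < ∫ t in (0:ℝ)..L, asymE p a b (u' t) := by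
      refine intervalIntegral.integral_pos hL
        ((asymE_continuous p a b hp).comp_continuousOn h.1.1.2)
        (fun x _ => asymE_nonneg p a b _ ha hb) ⟨t, ht, ?_⟩
      exact lt_of_le_of_ne (asymE_nonneg p a b _ ha hb)
        (fun hz => hut (asymE_eq_zero p a b _ hp ha hb hz.symm))
    linarith
  obtain ⟨t, ht, hut⟩ := hne
  have h5 := (h.1.1.mono le_rfl ht.2).integral_eq ht.1
  rw [h.1.2.1, intervalIntegral.integral_congr (g := fun _ => (0:ℝ))] at h5
  · simp at h5; exact hut h5.symm
  · intro s hs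
    rw [uIcc_of_le ht.1] at hs
    exact h4 s ⟨hs.1, hs.2.trans ht.2⟩


/-- The density of the generalized arcsine, extended by `1` outside `(0,1)`. -/
noncomputable def gA (p s : ℝ) : ℝ := if 0 < s ∧ s < 1 then (1 - s ^ p) ^ (-(1 / p)) else 1

/-- The generalized arcsine. -/
noncomputable def arc (p x : ℝ) : ℝ := ∫ s in (0:ℝ)..x, gA p s

lemma one_sub_rpow_pos {p s : ℝ} (hp : 1 < p) (h0 : 0 < s) (h1 : s < 1) : 0 < 1 - s ^ p := by
  have := Real.rpow_lt_one h0.le h1 (by linarith : 0 < p)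
  linarith

lemma gA_one_le {p : ℝ} (hp : 1 < p) (s : ℝ) : 1 ≤ gA p s := by
  unfold gA
  split_ifs with h
  · have h1 := one_sub_rpow_pos hp h.1 h.2
    have h2 : 0 ≤ s ^ p := Real.rpow_nonneg h.1.le _
    refine Real.one_le_rpow_of_pos_of_le_one_of_nonpos h1 (by linarith) ?_
    have : 0 < 1 / p := by positivity
    linarith
  · exact le_rfl

lemma gA_measurable (p : ℝ) : Measurable (gA p) := by
  unfold gA
  refine Measurable.ite ?_ ?_ measurable_const
  · exact measurableSet_Ioo
  · fun_prop

lemma gA_int {p : ℝ} (hp : 1 < p) (x y : ℝ) :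
    IntervalIntegrable (gA p) MeasureTheory.volume x y := by
  have hr : -1 < -(1 / p) := by
    have : 1 / p < 1 := by rw [div_lt_one (by linarith)]; exact hp
    linarith
  have h1 : IntervalIntegrable (fun s : ℝ => (1 - s) ^ (-(1 / p))) MeasureTheory.volume x y := by
    have := (intervalIntegral.intervalIntegrable_rpow' hr (a := 1 - x) (b := 1 - y)).comp_sub_left 1
    simpa using this
  refine (h1.norm.add (intervalIntegrable_const (c := (1:ℝ)))).mono_fun
    (gA_measurable p).aestronglyMeasurable ?_
  refine Filter.Eventually.of_forall fun s => ?_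
  have hg := gA_one_le hp s
  beta_reduce
  rw [Real.norm_of_nonneg (by linarith : 0 ≤ gA p s), Real.norm_of_nonneg (by positivity)]
  have h0 : 0 ≤ ‖(1 - s) ^ (-(1 / p))‖ := norm_nonneg _
  unfold gA
  split_ifs with h
  · have hs : 0 < 1 - s := by linarith [h.2]
    rw [Real.norm_of_nonneg (Real.rpow_nonneg hs.le _)]
    have : (1 - s ^ p) ^ (-(1 / p)) ≤ (1 - s) ^ (-(1 / p)) := by
      refine Real.rpow_le_rpow_of_nonpos hs ?_ ?_
      · have : s ^ p ≤ s ^ (1:ℝ) := Real.rpow_le_rpow_of_exponent_ge h.1 h.2.le hp.le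
        rw [Real.rpow_one] at this
        linarith
      · have : 0 < 1 / p := by positivity
        linarith
    linarith
  · linarith

lemma arc_continuous {p : ℝ} (hp : 1 < p) : Continuous (arc p) :=
  intervalIntegral.continuous_primitive (gA_int hp) 0

lemma arc_sub {p : ℝ} (hp : 1 < p) (x y : ℝ) : arc p y - arc p x = ∫ s in x..y, gA p s := by
  unfold arc
  rw [intervalIntegral.integral_interval_sub_left (gA_int hp _ _) (gA_int hp _ _)]

lemma arc_sub_ge {p : ℝ} (hp : 1 < p) {x y : ℝ} (h : x ≤ y) : y - x ≤ arc p y - arc p x := by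
  rw [arc_sub hp]
  have := intervalIntegral.integral_mono_on (f := fun _ => (1:ℝ)) h (by simp) (gA_int hp x y)
    (fun s _ => gA_one_le hp s)
  simpa using this

lemma arc_strictMono {p : ℝ} (hp : 1 < p) : StrictMono (arc p) := by
  intro x y h
  have := arc_sub_ge hp h.le
  linarith

lemma arc_zero (p : ℝ) : arc p 0 = 0 := by simp [arc]

lemma arc_surj {p : ℝ} (hp : 1 < p) : Function.Surjective (arc p) := by
  refine (arc_continuous hp).surjective ?_ ?_
  · refine Filter.tendsto_atTop_mono' _ ?_ Filter.tendsto_id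
    filter_upwards [Filter.eventually_ge_atTop 0] with x hx
    have := arc_sub_ge hp hx
    rw [arc_zero] at this
    simp; linarith
  · refine Filter.tendsto_atBot_mono' _ ?_ Filter.tendsto_id
    filter_upwards [Filter.eventually_le_atBot 0] with x hx
    have := arc_sub_ge hp hx
    rw [arc_zero] at this
    simp; linarith

lemma arc_hasDerivAt {p x : ℝ} (hp : 1 < p) (h0 : 0 < x) (h1 : x < 1) :
    HasDerivAt (arc p) ((1 - x ^ p) ^ (-(1 / p))) x := by
  have e : gA p x = (1 - x ^ p) ^ (-(1 / p)) := if_pos ⟨h0, h1⟩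
  rw [← e]
  refine intervalIntegral.integral_hasDerivAt_right (gA_int hp _ _)
    (gA_measurable p).stronglyMeasurable.stronglyMeasurableAtFilter ?_
  have c : ContinuousAt (fun s : ℝ => (1 - s ^ p) ^ (-(1 / p))) x := by
    refine ContinuousAt.rpow_const ?_ (Or.inl (one_sub_rpow_pos hp h0 h1).ne')
    exact continuousAt_const.sub (Real.continuousAt_rpow_const _ _ (Or.inl h0.ne'))
  refine c.congr ?_
  filter_upwards [Ioo_mem_nhds h0 h1] with s hs
  exact (if_pos hs).symm

/-- Half of the generalized `π`. -/
noncomputable def A1 (p : ℝ) : ℝ := arc p 1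

lemma A1_pos {p : ℝ} (hp : 1 < p) : 0 < A1 p := by
  have := arc_strictMono hp (zero_lt_one)
  rw [arc_zero] at this
  exact this

/-- The generalized sine: there is an inverse of `arc` with the expected properties. -/
lemma exists_sin {p : ℝ} (hp : 1 < p) : ∃ S : ℝ → ℝ, Continuous S ∧ S 0 = 0 ∧ S (A1 p) = 1 ∧
    (∀ τ ∈ Ioo 0 (A1 p), 0 < S τ ∧ S τ < 1) ∧
    (∀ τ ∈ Ioo 0 (A1 p), HasDerivAt S ((1 - (S τ) ^ p) ^ (1 / p)) τ) := by
  set e := (arc_strictMono hp).orderIsoOfSurjective _ (arc_surj hp) with he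
  have hl : ∀ x, e.symm (arc p x) = x := fun x => e.symm_apply_apply x
  have hr : ∀ x, arc p (e.symm x) = x := fun x => e.apply_symm_apply x
  have h0 : e.symm 0 = 0 := by simpa only [arc_zero] using hl 0
  have h1 : e.symm (A1 p) = 1 := hl 1
  have hS : ∀ τ ∈ Ioo 0 (A1 p), 0 < e.symm τ ∧ e.symm τ < 1 := by
    intro τ hτ
    constructor
    · have := e.symm.strictMono hτ.1
      rwa [h0] at this
    · have := e.symm.strictMono hτ.2
      rwa [h1] at this
  refine ⟨e.symm, e.symm.continuous, h0, h1, hS, ?_⟩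
  intro τ hτ
  have hd := arc_hasDerivAt hp (hS τ hτ).1 (hS τ hτ).2
  have hX := one_sub_rpow_pos hp (hS τ hτ).1 (hS τ hτ).2
  have := HasDerivAt.of_local_left_inverse (e.symm.continuous.continuousAt) hd
    (by positivity) (Filter.Eventually.of_forall hr)
  rwa [Real.rpow_neg hX.le, inv_inv] at this

/-- The time needed for a quarter wave. -/
lemma quarter {p a κ M α m : ℝ} {u u' : ℝ → ℝ} (hp : 1 < p) (ha : 0 < a) (hκ : 0 < κ) (hM : 0 < M)
    (hαm : α < m) (hc : ContinuousOn u (Icc α m))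
    (hd : ∀ t ∈ Ioo α m, HasDerivAt u (u' t) t)
    (hu' : ∀ t ∈ Ioo α m, 0 < u' t) (hu : ∀ t ∈ Ioo α m, 0 < u t ∧ u t < M)
    (hE : ∀ t ∈ Ioo α m, a ^ p * (u' t) ^ p = κ ^ p * (M ^ p - (u t) ^ p))
    (h0 : u α = 0) (h1 : u m = M) : m - α = a * A1 p / κ := by
  have hD : ∀ t ∈ Ioo α m, HasDerivAt (fun t => arc p (u t / M)) (κ / a) t := by
    intro t ht
    obtain ⟨hu0, huM⟩ := hu t ht
    have hs0 : 0 < u t / M := by positivity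
    have hs1 : u t / M < 1 := by rwa [div_lt_one hM]
    have hX := one_sub_rpow_pos hp hs0 hs1
    set X := 1 - (u t / M) ^ p with hXdef
    have h2 := (arc_hasDerivAt hp hs0 hs1).comp t ((hd t ht).div_const M)
    refine h2.congr_deriv ?_
    have h3 : (a * u' t) ^ p = (κ * M) ^ p * X := by
      have hMp : M ^ p ≠ 0 := by positivity
      rw [Real.mul_rpow ha.le (hu' t ht).le, hE t ht, Real.mul_rpow hκ.le hM.le, hXdef,
        Real.div_rpow hu0.le hM.le]
      field_simp
    have hp0 : p ≠ 0 := by linarith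
    have h4 : a * u' t = κ * M * X ^ (1 / p) := by
      have h5 : ((a * u' t) ^ p) ^ (1 / p) = ((κ * M) ^ p * X) ^ (1 / p) := by rw [h3]
      have hau : 0 ≤ a * u' t := mul_nonneg ha.le (hu' t ht).le
      rw [Real.mul_rpow (by positivity) hX.le, ← Real.rpow_mul hau,
        ← Real.rpow_mul (by positivity), mul_one_div_cancel hp0, Real.rpow_one, Real.rpow_one] at h5
      exact h5
    have h5 : u' t = κ * M * X ^ (1 / p) / a := by field_simp; linarith
    rw [h5, Real.rpow_neg hX.le]
    have : X ^ (1 / p) ≠ 0 := by positivity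
    field_simp
  have hI := intervalIntegral.integral_eq_sub_of_hasDerivAt_of_le hαm.le
    ((arc_continuous hp).comp_continuousOn (hc.div_const M)) hD (by simp)
  simp only [intervalIntegral.integral_const, Function.comp, h0, h1, zero_div, arc_zero,
    div_self hM.ne', smul_eq_mul, sub_zero] at hI
  unfold A1
  rw [← hI]
  field_simp


lemma rise_part {p a b κ α m : ℝ} {u u' : ℝ → ℝ} (hp : 1 < p) (ha : 0 < a) (hb : 0 < b)
    (hκ : 0 < κ) (hαm : α < m) (h : SSol p a b ((p - 1) * κ ^ p) α m u u') (h0 : u α = 0)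
    (hpos : ∀ t ∈ Ioc α m, 0 < u t) (h1 : u' m = 0) (hu' : ∀ t ∈ Ioo α m, 0 < u' t) :
    m - α = a * A1 p / κ := by
  have hmono : StrictMonoOn u (Icc α m) := by
    refine strictMonoOn_of_deriv_pos (convex_Icc _ _) h.1.continuousOn ?_
    intro t ht
    rw [interior_Icc] at ht
    rw [(h.1.hasDerivAt ht).deriv]
    exact hu' t ht
  have hM := hpos m ⟨hαm, le_rfl⟩
  refine quarter hp ha hκ hM hαm h.1.continuousOn (fun t ht => h.1.hasDerivAt ht) hu' ?_ ?_ h0 rfl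
  · intro t ht
    exact ⟨hpos t ⟨ht.1, ht.2.le⟩, hmono ⟨ht.1.le, ht.2.le⟩ ⟨hαm.le, le_rfl⟩ ht.2⟩
  · intro t ht
    have hE := h.energy hp ha hb (Ioo_subset_Icc_self ht) (right_mem_Icc.2 hαm.le)
    have hut := hpos t ⟨ht.1, ht.2.le⟩
    rw [h1, asymE_pos p a b (u' t) hp (hu' t ht).le, asymE_pos p a b 0 hp le_rfl,
      asymE_pos p 1 1 _ hp hut.le, asymE_pos p 1 1 _ hp hM.le,
      Real.zero_rpow (by linarith), Real.one_rpow] at hE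
    have hp1 : p - 1 ≠ 0 := by linarith
    refine mul_left_cancel₀ hp1 ?_
    linarith

lemma half_wave {p a b κ α β : ℝ} {u u' : ℝ → ℝ} (hp : 1 < p) (ha : 0 < a) (hb : 0 < b)
    (hκ : 0 < κ) (hαβ : α < β) (h : SSol p a b ((p - 1) * κ ^ p) α β u u') (h0 : u α = 0)
    (h1 : u β = 0) (hpos : ∀ t ∈ Ioo α β, 0 < u t) : β - α = (a + b) * A1 p / κ := by
  have hp1 : 0 < p - 1 := by linarith
  have hanti : StrictAntiOn (fun t => asymFlux p a b (u' t)) (Icc α β) := by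
    refine strictAntiOn_of_deriv_neg (convex_Icc _ _) h.2.continuousOn ?_
    intro t ht
    rw [interior_Icc] at ht
    rw [(h.2.hasDerivAt ht).deriv]
    have := (asymFlux_pos_iff p 1 1 (u t) hp one_pos one_pos).2 (hpos t ht)
    have h3 : 0 < (p - 1) * κ ^ p := by positivity
    have := mul_pos h3 this
    linarith
  obtain ⟨m, hm, hum⟩ := exists_hasDerivAt_eq_zero hαβ h.1.continuousOn (h0.trans h1.symm)
    (fun t ht => h.1.hasDerivAt ht)
  have hwm : asymFlux p a b (u' m) = 0 := by rw [hum, asymFlux_zero p a b hp]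
  have hl : ∀ t ∈ Ioo α m, 0 < u' t := by
    intro t ht
    have := hanti ⟨ht.1.le, (ht.2.trans hm.2).le⟩ (Ioo_subset_Icc_self hm) ht.2
    simp only [hwm] at this
    exact (asymFlux_pos_iff p a b _ hp ha hb).1 this
  have hr : ∀ t ∈ Ioo m β, u' t < 0 := by
    intro t ht
    have := hanti (Ioo_subset_Icc_self hm) ⟨(hm.1.trans ht.1).le, ht.2.le⟩ ht.1
    simp only [hwm] at this
    exact (asymFlux_neg_iff p a b _ hp ha hb).1 this
  have e1 := rise_part hp ha hb hκ hm.1 (h.mono le_rfl hm.2.le) h0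
    (fun t ht => hpos t ⟨ht.1, lt_of_le_of_lt ht.2 hm.2⟩) hum hl
  have e2 := rise_part hp hb ha hκ (α := 0 - β) (m := 0 - m) (by linarith [hm.2])
    ((h.mono hm.1.le le_rfl).reflect 0) (by simpa using h1)
    (fun t ht => hpos _ ⟨by linarith [ht.2, hm.1], by linarith [ht.1]⟩) (by simp [hum])
    (fun t ht => by
      have := hr (0 - t) ⟨by linarith [ht.2], by linarith [ht.1]⟩
      linarith)
  have : β - α = a * A1 p / κ + b * A1 p / κ := by rw [← e1, ← e2]; ring
  rw [this]; ring

lemma next_zero_pos {p a b κ L α : ℝ} {u u' : ℝ → ℝ} (hp : 1 < p) (ha : 0 < a) (hb : 0 < b)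
    (hκ : 0 < κ) (h : SSol p a b ((p - 1) * κ ^ p) 0 L u u') (hL : u L = 0) (hα : 0 ≤ α)
    (hαL : α < L) (h0 : u α = 0) (hu' : 0 < u' α) :
    α + (a + b) * A1 p / κ ≤ L ∧ u (α + (a + b) * A1 p / κ) = 0 := by
  have hs := (hasDerivWithinAt_iff_tendsto_slope' (by simp)).1
    ((h.1.1 α ⟨hα, hαL.le⟩).mono (s := Ioc α L) (fun x hx => ⟨hα.trans hx.1.le, hx.2⟩))
  have hev := hs.eventually_const_lt hu'
  rw [nhdsWithin_Ioc_eq_nhdsGT hαL] at hev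
  obtain ⟨δ, hδ, hsub⟩ := mem_nhdsGT_iff_exists_Ioo_subset.1 hev
  have hpos1 : ∀ t ∈ Ioo α δ, 0 < u t := by
    intro t ht
    have h2 : 0 < slope u α t := hsub ht
    rw [slope_def_field, h0, sub_zero] at h2
    have h3 : 0 < t - α := by linarith [ht.1]
    exact (div_pos_iff_of_pos_right h3).1 h2
  have hδL : δ ≤ L := by
    by_contra hc
    have := hpos1 L ⟨hαL, not_le.1 hc⟩
    linarith
  simp only [mem_Ioi] at hδ
  set γ := (α + δ) / 2 with hγ
  have hγ1 : α < γ := by rw [hγ]; linarith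
  have hγ2 : γ < δ := by rw [hγ]; linarith
  have hcont : ContinuousOn u (Icc γ L) :=
    h.1.continuousOn.mono (Icc_subset_Icc (by linarith) le_rfl)
  have hcomp : IsCompact (Icc γ L ∩ u ⁻¹' (Iic 0)) :=
    isCompact_Icc.of_isClosed_subset (hcont.preimage_isClosed_of_isClosed isClosed_Icc isClosed_Iic)
      inter_subset_left
  obtain ⟨β, ⟨hβ, hβ0⟩, hleast⟩ := hcomp.exists_isLeast ⟨L, ⟨⟨by linarith, le_rfl⟩, hL.le⟩⟩
  have hposβ : ∀ t ∈ Ioo α β, 0 < u t := by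
    intro t ht
    by_cases htd : t < δ
    · exact hpos1 t ⟨ht.1, htd⟩
    · by_contra hc
      have := hleast ⟨⟨by linarith, by linarith [ht.2, hβ.2]⟩, not_lt.1 hc⟩
      linarith [ht.2]
  have hαβ : α < β := by linarith [hβ.1]
  have huβ : u β = 0 := by
    refine le_antisymm hβ0 ?_
    have hc : ContinuousWithinAt u (Ioo α β) β :=
      (h.1.continuousOn β ⟨by linarith, hβ.2⟩).mono (fun x hx => ⟨by linarith [hx.1],
        by linarith [hx.2, hβ.2]⟩)
    have : (nhdsWithin β (Ioo α β)).NeBot := by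
      rw [nhdsWithin_Ioo_eq_nhdsLT hαβ]; infer_instance
    refine ge_of_tendsto hc ?_
    filter_upwards [self_mem_nhdsWithin] with x hx
    exact (hposβ x hx).le
  have := half_wave hp ha hb hκ hαβ (h.mono hα hβ.2) h0 huβ hposβ
  have e : α + (a + b) * A1 p / κ = β := by linarith
  rw [e]
  exact ⟨hβ.2, huβ⟩

lemma next_zero {p a b κ L α : ℝ} {u u' : ℝ → ℝ} (hp : 1 < p) (ha : 0 < a) (hb : 0 < b)
    (hκ : 0 < κ) (h : SSol p a b ((p - 1) * κ ^ p) 0 L u u') (hL : u L = 0) (hα : 0 ≤ α)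
    (hαL : α < L) (h0 : u α = 0) (hne : ∃ t ∈ Icc (0:ℝ) L, u t ≠ 0) :
    α + (a + b) * A1 p / κ ≤ L ∧ u (α + (a + b) * A1 p / κ) = 0 := by
  have hp1 : 0 < p - 1 := by linarith
  have hu' : u' α ≠ 0 := by
    intro hz
    obtain ⟨t, ht, hut⟩ := hne
    have hE := h.energy hp ha hb ht ⟨hα, hαL.le⟩
    rw [h0, hz, asymE_pos p a b 0 hp le_rfl, asymE_pos p 1 1 0 hp le_rfl,
      Real.zero_rpow (by linarith), ← abs_rpow_eq p _ hp] at hE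
    have h1 := asymE_nonneg p a b (u' t) ha hb
    have h2 : 0 < (p - 1) * κ ^ p * |u t| ^ p := by positivity
    have h3 : 0 ≤ (p - 1) * asymE p a b (u' t) := by positivity
    linarith
  rcases lt_or_gt_of_ne hu' with h1 | h1
  · have := next_zero_pos hp hb ha hκ h.neg (by simp [hL]) hα hαL (by simp [h0])
      (by simpa using h1)
    rw [add_comm b a, neg_eq_zero] at this
    exact this
  · exact next_zero_pos hp ha hb hκ h hL hα hαL h0 h1

lemma count {p a b κ L : ℝ} {u u' : ℝ → ℝ} (hp : 1 < p) (ha : 0 < a) (hb : 0 < b) (hL : 0 < L)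
    (hκ : 0 < κ) (h : SSol p a b ((p - 1) * κ ^ p) 0 L u u') (h0 : u 0 = 0) (hL0 : u L = 0)
    (hne : ∃ t ∈ Icc (0:ℝ) L, u t ≠ 0) :
    ∃ k : ℕ, 0 < k ∧ L = k * ((a + b) * A1 p / κ) := by
  have hA := A1_pos hp
  set ℓ := (a + b) * A1 p / κ with hℓ
  have hℓ0 : 0 < ℓ := by positivity
  have key : ∀ k : ℕ, (k : ℝ) * ℓ ≤ L → u (k * ℓ) = 0 := by
    intro k
    induction k with
    | zero => intro _; simpa using h0
    | succ k ih =>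
      intro hk
      push_cast at hk ⊢
      have hlt : (k : ℝ) * ℓ < L := by linarith
      have := (next_zero hp ha hb hκ h hL0 (by positivity) hlt (ih hlt.le) hne).2
      rw [← hℓ] at this
      rw [show ((k : ℝ) + 1) * ℓ = k * ℓ + ℓ by ring]
      exact this
  have hfl : ((⌊L / ℓ⌋₊ : ℕ) : ℝ) * ℓ ≤ L := by
    have := Nat.floor_le (show 0 ≤ L / ℓ by positivity)
    rwa [le_div_iff₀ hℓ0] at this
  have hfl2 : L < ((⌊L / ℓ⌋₊ : ℕ) : ℝ) * ℓ + ℓ := by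
    have := Nat.lt_floor_add_one (L / ℓ)
    rw [div_lt_iff₀ hℓ0] at this
    linarith
  have hLe : L = ((⌊L / ℓ⌋₊ : ℕ) : ℝ) * ℓ := by
    rcases hfl.lt_or_eq with hlt | he
    · have := (next_zero hp ha hb hκ h hL0 (by positivity) hlt (key _ hfl) hne).1
      rw [← hℓ] at this
      linarith
    · exact he.symm
  refine ⟨_, ?_, hLe⟩
  rw [Nat.pos_iff_ne_zero]
  intro hz
  rw [hz] at hLe
  simp at hLe
  linarith

lemma eig_form {p a b L lam : ℝ} (hp : 1 < p) (ha : 0 < a) (hb : 0 < b) (hL : 0 < L)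
    (h : DirichletEig p a b L lam) :
    ∃ k : ℕ, 0 < k ∧ lam = (k : ℝ) ^ p * ((p - 1) * ((a + b) * A1 p / L) ^ p) := by
  obtain ⟨u, u', hw, hne⟩ := h
  have hlam := eig_pos hp ha hb hL hw hne
  have hp1 : 0 < p - 1 := by linarith
  have hA := A1_pos hp
  have hs := weak_strong hL hp hw
  set κ := (lam / (p - 1)) ^ (1 / p) with hκd
  have hκ : 0 < κ := by positivity
  have e : lam = (p - 1) * κ ^ p := by
    rw [hκd, ← Real.rpow_mul (by positivity), one_div_mul_cancel (by linarith), Real.rpow_one]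
    field_simp
  rw [e] at hs
  obtain ⟨k, hk, hLk⟩ := count hp ha hb hL hκ hs hw.1.2.1 hw.1.2.2 hne
  refine ⟨k, hk, ?_⟩
  have hk' : (0:ℝ) < k := by exact_mod_cast hk
  have e2 : κ = k * ((a + b) * A1 p / L) := by
    field_simp
    field_simp at hLk
    linarith
  rw [e, e2, Real.mul_rpow hk'.le (by positivity)]
  ring


lemma exists_rise {p a b κ : ℝ} (hp : 1 < p) (ha : 0 < a) (hκ : 0 < κ) :
    ∃ u u' : ℝ → ℝ, SSol p a b ((p - 1) * κ ^ p) 0 (a * A1 p / κ) u u' ∧ u 0 = 0 ∧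
      u' 0 = κ / a ∧ u (a * A1 p / κ) = 1 ∧ u' (a * A1 p / κ) = 0 ∧
      ∀ t ∈ Ioc 0 (a * A1 p / κ), 0 < u t := by
  obtain ⟨S, hSc, hS0, hS1, hSr, hSd⟩ := exists_sin hp
  have hA := A1_pos hp
  have hp0 : 0 < p := by linarith
  have hp1 : 0 < p - 1 := by linarith
  set m := a * A1 p / κ with hm
  have hm0 : 0 < m := by positivity
  set v : ℝ → ℝ := fun t => S (κ / a * t) with hv
  have hvc : Continuous v := hSc.comp (by fun_prop)
  have hv0 : v 0 = 0 := by simp [hv, hS0]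
  have hv1 : v m = 1 := by
    have : κ / a * m = A1 p := by rw [hm]; field_simp
    simp [hv, this, hS1]
  have hmem : ∀ t ∈ Ioo 0 m, κ / a * t ∈ Ioo 0 (A1 p) := by
    intro t ht
    refine ⟨mul_pos (by positivity) ht.1, ?_⟩
    have := mul_lt_mul_of_pos_left ht.2 (show 0 < κ / a by positivity)
    have e : κ / a * m = A1 p := by rw [hm]; field_simp
    linarith
  have hvr : ∀ t ∈ Ioo 0 m, 0 < v t ∧ v t < 1 := fun t ht => hSr _ (hmem t ht)
  have hvI : ∀ t ∈ Icc 0 m, 0 ≤ v t ∧ v t ≤ 1 := by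
    intro t ht
    rcases ht.1.eq_or_lt with h | h
    · rw [← h, hv0]; norm_num
    · rcases ht.2.eq_or_lt with h' | h'
      · rw [h', hv1]; norm_num
      · exact ⟨(hvr t ⟨h, h'⟩).1.le, (hvr t ⟨h, h'⟩).2.le⟩
  have hX : ∀ t ∈ Icc 0 m, 0 ≤ 1 - v t ^ p := by
    intro t ht
    have := Real.rpow_le_one (hvI t ht).1 (hvI t ht).2 hp0.le
    linarith
  have hXc : Continuous (fun t => 1 - v t ^ p) :=
    continuous_const.sub (hvc.rpow_const (fun _ => Or.inr hp0.le))
  set v' : ℝ → ℝ := fun t => κ / a * (1 - v t ^ p) ^ (1 / p) with hv'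
  have hv'c : Continuous v' :=
    continuous_const.mul (hXc.rpow_const (fun _ => Or.inr (by positivity)))
  have hvd : ∀ t ∈ Ioo 0 m, HasDerivAt v (v' t) t := by
    intro t ht
    have h1 := (hSd _ (hmem t ht)).comp t ((hasDerivAt_id t).const_mul (κ / a))
    refine h1.congr_deriv ?_
    simp only [hv', hv]
    ring
  refine ⟨v, v', ⟨?_, ?_⟩, hv0, ?_, hv1, ?_, ?_⟩
  · exact C1On_of_countable hm0.le countable_empty hvc.continuousOn hv'c.continuousOn
      (fun t ht => hvd t ht.1)
  · have hfc : Continuous (fun t => -((p - 1) * κ ^ p * asymFlux p 1 1 (v t))) :=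
      (continuous_const.mul ((asymFlux_continuous p 1 1 hp).comp hvc)).neg
    have hzc : Continuous (fun t => a * κ ^ (p - 1) * (1 - v t ^ p) ^ ((p - 1) / p)) :=
      continuous_const.mul (hXc.rpow_const (fun _ => Or.inr (by positivity)))
    refine C1On.congr (u := fun t => a * κ ^ (p - 1) * (1 - v t ^ p) ^ ((p - 1) / p))
      (u' := fun t => -((p - 1) * κ ^ p * asymFlux p 1 1 (v t))) ?_ ?_ (fun _ _ => rfl)
    · refine C1On_of_countable hm0.le countable_empty hzc.continuousOn hfc.continuousOn ?_
      rintro t ⟨ht, -⟩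
      obtain ⟨h0, h1⟩ := hvr t ht
      have hXt := one_sub_rpow_pos hp h0 h1
      have d1 := ((hvd t ht).rpow_const (p := p) (Or.inl h0.ne')).const_sub 1
      have d2 := (d1.rpow_const (p := (p - 1) / p) (Or.inl hXt.ne')).const_mul (a * κ ^ (p - 1))
      refine d2.congr_deriv ?_
      rw [asymFlux_pos p 1 1 _ hp h0.le, Real.one_rpow]
      simp only [hv']
      have e1 : (p - 1) / p - 1 = -(1 / p) := by field_simp; ring
      rw [e1, Real.rpow_neg hXt.le, Real.rpow_sub_one hκ.ne']
      have : (1 - v t ^ p) ^ (1 / p) ≠ 0 := by positivity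
      field_simp
    · intro t ht
      have hXt := hX t ht
      simp only [hv']
      rw [asymFlux_pos p a b _ hp (by positivity), Real.mul_rpow (by positivity) (by positivity),
        ← Real.rpow_mul hXt, Real.div_rpow hκ.le ha.le, Real.rpow_sub_one ha.ne']
      have e1 : 1 / p * (p - 1) = (p - 1) / p := by ring
      rw [e1]
      have : a ^ p ≠ 0 := by positivity
      field_simp
  · simp [hv', hv0, Real.zero_rpow hp0.ne']
  · simp [hv', hv1, Real.zero_rpow (inv_ne_zero hp0.ne')]
  · intro t ht
    rcases ht.2.eq_or_lt with h | h
    · rw [h, hv1]; norm_num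
    · exact (hvr t ⟨ht.1, h⟩).1

lemma exists_bump {p a b κ : ℝ} (hp : 1 < p) (ha : 0 < a) (hb : 0 < b) (hκ : 0 < κ) :
    ∃ u u' : ℝ → ℝ, SSol p a b ((p - 1) * κ ^ p) 0 ((a + b) * A1 p / κ) u u' ∧ u 0 = 0 ∧
      u' 0 = κ / a ∧ u ((a + b) * A1 p / κ) = 0 ∧ u' ((a + b) * A1 p / κ) = -(κ / b) ∧
      ∀ t ∈ Ioo 0 ((a + b) * A1 p / κ), 0 < u t := by
  obtain ⟨u, u', hu, hu0, hu'0, hum, hu'm, hupos⟩ := exists_rise (b := b) hp ha hκ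
  obtain ⟨v, v', hv, hv0, hv'0, hvm, hv'm, hvpos⟩ := exists_rise (b := a) hp hb hκ
  have hA := A1_pos hp
  have hma : 0 < a * A1 p / κ := by positivity
  have hmb : 0 < b * A1 p / κ := by positivity
  have hl : (a + b) * A1 p / κ = a * A1 p / κ + b * A1 p / κ := by ring
  rw [hl]
  set ma := a * A1 p / κ
  set mb := b * A1 p / κ
  have hv2 := hv.reflect (ma + mb)
  rw [sub_zero, add_sub_cancel_right] at hv2
  refine ⟨_, _, SSol.glue hma.le (by linarith) hu hv2 ?_ ?_, ?_, ?_, ?_, ?_, ?_⟩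
  · simp [hum, hvm]
  · simp [hu'm, hv'm]
  · simp [hma.le, hu0]
  · simp [hma.le, hu'0]
  · simp [not_le.2 hmb, hv0]
  · simp [not_le.2 hmb, hv'0]
  · intro t ht
    by_cases h : t ≤ ma
    · simp only [h, if_true]
      exact hupos t ⟨ht.1, h⟩
    · simp only [h, if_false]
      exact hvpos _ ⟨by linarith [ht.2], by linarith⟩

lemma exists_chain {p κ : ℝ} (hp : 1 < p) (hκ : 0 < κ) (k : ℕ) : ∀ a b : ℝ, 0 < a → 0 < b →
    ∃ u u' : ℝ → ℝ, SSol p a b ((p - 1) * κ ^ p) 0 ((k + 1 : ℝ) * ((a + b) * A1 p / κ)) u u' ∧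
      u 0 = 0 ∧ u' 0 = κ / a ∧ u ((k + 1 : ℝ) * ((a + b) * A1 p / κ)) = 0 ∧
      ∀ t ∈ Ioo 0 ((a + b) * A1 p / κ), 0 < u t := by
  have hA := A1_pos hp
  induction k with
  | zero =>
    intro a b ha hb
    obtain ⟨u, u', h1, h2, h3, h4, h5, h6⟩ := exists_bump hp ha hb hκ
    refine ⟨u, u', ?_, h2, h3, ?_, h6⟩ <;> simpa
  | succ k ih =>
    intro a b ha hb
    obtain ⟨u, u', hu, hu0, hu'0, hul, hu'l, hupos⟩ := exists_bump hp ha hb hκ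
    obtain ⟨v, v', hv, hv0, hv'0, hvl, -⟩ := ih b a hb ha
    rw [add_comm b a] at hv hvl
    have hℓ : 0 < (a + b) * A1 p / κ := by positivity
    set ℓ := (a + b) * A1 p / κ
    have hk : 0 < ((k : ℝ) + 1) * ℓ := by positivity
    have hv2 := hv.neg.shift ℓ
    rw [zero_add] at hv2
    have e : ((k + 1 : ℕ) + 1 : ℝ) * ℓ = (k + 1) * ℓ + ℓ := by push_cast; ring
    rw [e]
    refine ⟨_, _, SSol.glue hℓ.le (by linarith) hu hv2 ?_ ?_, ?_, ?_, ?_, ?_⟩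
    · simp [hul, hv0]
    · simp [hu'l, hv'0]
    · simp [hℓ.le, hu0]
    · simp [hℓ.le, hu'0]
    · simp only [add_sub_cancel_right, hvl, not_le.2 (show ℓ < (k + 1) * ℓ + ℓ by linarith),
        if_false, neg_zero]
    · intro t ht
      simp only [ht.2.le, if_true]
      exact hupos t ht

lemma exists_eig {p a b L : ℝ} (hp : 1 < p) (ha : 0 < a) (hb : 0 < b) (hL : 0 < L) (k : ℕ)
    (hk : 0 < k) :
    DirichletEig p a b L ((k : ℝ) ^ p * ((p - 1) * ((a + b) * A1 p / L) ^ p)) := by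
  have hA := A1_pos hp
  obtain ⟨j, rfl⟩ := Nat.exists_eq_succ_of_ne_zero hk.ne'
  have hj : (0:ℝ) < (j + 1 : ℝ) := by positivity
  set κ : ℝ := (j + 1) * ((a + b) * A1 p / L) with hκd
  have hκ : 0 < κ := by positivity
  obtain ⟨u, u', hu, hu0, -, hul, hpos⟩ := exists_chain hp hκ j a b ha hb
  have e : (j + 1 : ℝ) * ((a + b) * A1 p / κ) = L := by
    rw [hκd]; field_simp
  rw [e] at hu hul
  have e2 : ((j.succ : ℕ) : ℝ) ^ p * ((p - 1) * ((a + b) * A1 p / L) ^ p) = (p - 1) * κ ^ p := by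
    rw [hκd, Real.mul_rpow hj.le (by positivity)]; push_cast; ring
  rw [e2]
  refine ⟨u, u', hu.weak hL hp hu0 hul, ?_⟩
  have hℓ : 0 < (a + b) * A1 p / κ := by positivity
  have hℓL : (a + b) * A1 p / κ ≤ L := by
    rw [← e]
    have : (0:ℝ) ≤ j := by positivity
    nlinarith
  exact ⟨(a + b) * A1 p / κ / 2, ⟨by linarith, by linarith⟩,
    (hpos _ ⟨by linarith, by linarith⟩).ne'⟩


lemma asymFlux_smul (p a b c s : ℝ) (hc : 0 ≤ c) :
    asymFlux p a b (c * s) = c ^ (p - 1) * asymFlux p a b s := by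
  unfold asymFlux
  have e1 : max (c * s) 0 = c * max s 0 := by rw [mul_max_of_nonneg _ _ hc, mul_zero]
  have e2 : max (-(c * s)) 0 = c * max (-s) 0 := by
    rw [mul_max_of_nonneg _ _ hc, mul_zero, mul_neg]
  rw [e1, e2, Real.mul_rpow hc (le_max_right _ _), Real.mul_rpow hc (le_max_right _ _)]
  ring

lemma asymE_smul (p a b c s : ℝ) (hc : 0 ≤ c) :
    asymE p a b (c * s) = c ^ p * asymE p a b s := by
  unfold asymE
  have e1 : max (c * s) 0 = c * max s 0 := by rw [mul_max_of_nonneg _ _ hc, mul_zero]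
  have e2 : max (-(c * s)) 0 = c * max (-s) 0 := by
    rw [mul_max_of_nonneg _ _ hc, mul_zero, mul_neg]
  rw [e1, e2, Real.mul_rpow hc (le_max_right _ _), Real.mul_rpow hc (le_max_right _ _)]
  ring

lemma picone_half {p a b lam L t : ℝ} {v v' u u' : ℝ → ℝ} (hp : 1 < p) (ha : 0 < a) (hb : 0 < b)
    (hv : SSol p a b lam 0 L v v') (hvp : ∀ t ∈ Icc (0:ℝ) L, 0 < v t) (hu : C1On 0 L u u')
    (ht : t ∈ Ioo 0 L) :
    ∃ d, HasDerivAt (fun t => asymFlux p a b (v' t) * (v t) ^ (1 - p) * (max (u t) 0) ^ p) d t ∧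
      d ≤ if 0 < u t then asymE p a b (u' t) - lam * (u t) ^ p else 0 := by
  have hvt := hvp t (Ioo_subset_Icc_self ht)
  have d1 := hv.2.hasDerivAt ht
  have d2 := (hv.1.hasDerivAt ht).rpow_const (p := 1 - p) (Or.inl hvt.ne')
  have d3 := (hasDerivAt_pospart p hp (u t)).comp t (hu.hasDerivAt ht)
  refine ⟨_, (d1.mul d2).mul d3, ?_⟩
  simp only [Pi.mul_apply, Function.comp]
  split_ifs with h
  · rw [max_eq_left h.le, asymFlux_pos p 1 1 _ hp hvt.le, Real.one_rpow]
    have hY := young_asym p a b (u' t) (u t / v t * v' t) hp ha hb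
    have hc : 0 ≤ u t / v t := by positivity
    rw [asymFlux_smul _ _ _ _ _ hc, asymE_smul _ _ _ _ _ hc, ← asymFlux_mul p a b (v' t) hp,
      Real.div_rpow h.le hvt.le, Real.div_rpow h.le hvt.le] at hY
    have e1 : (v t) ^ (1 - p) = v t / (v t) ^ p := by
      rw [Real.rpow_sub hvt, Real.rpow_one]
    have e2 : (v t) ^ (1 - p - 1) = 1 / (v t) ^ p := by
      rw [show 1 - p - 1 = -p by ring, Real.rpow_neg hvt.le, one_div]
    rw [e1, e2, Real.rpow_sub_one hvt.ne']
    rw [Real.rpow_sub_one hvt.ne'] at hY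
    have hvp0 : (v t) ^ p ≠ 0 := by positivity
    set W := asymFlux p a b (v' t)
    have e3 : (-(lam * (1 * ((v t) ^ p / v t))) * (v t / (v t) ^ p) +
        W * (v' t * (1 - p) * (1 / (v t) ^ p))) * (u t) ^ p +
        W * (v t / (v t) ^ p) * (p * (u t) ^ (p - 1) * u' t) =
      p * ((u t) ^ (p - 1) / ((v t) ^ p / v t) * W * u' t) -
        (p - 1) * ((u t) ^ p / (v t) ^ p * (W * v' t)) - lam * (u t) ^ p := by
      field_simp
      ring
    rw [e3]
    linarith
  · rw [max_eq_right (not_lt.1 h), Real.zero_rpow (by linarith), Real.zero_rpow (by linarith)]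
    simp

lemma picone {p a b lam L : ℝ} {v v' z z' u u' : ℝ → ℝ} (hp : 1 < p) (ha : 0 < a) (hb : 0 < b)
    (hL : 0 < L)
    (hv : SSol p a b lam 0 L v v') (hvp : ∀ t ∈ Icc (0:ℝ) L, 0 < v t)
    (hz : SSol p b a lam 0 L z z') (hzp : ∀ t ∈ Icc (0:ℝ) L, 0 < z t)
    (hu : Adm L u u') :
    lam * (∫ t in (0:ℝ)..L, |u t| ^ p) ≤ ∫ t in (0:ℝ)..L, asymE p a b (u' t) := by
  have hp0 : 0 < p := by linarith
  have hci : ∀ f : ℝ → ℝ, ContinuousOn f (Icc 0 L) →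
      IntervalIntegrable f MeasureTheory.volume 0 L := fun f hf =>
    ContinuousOn.intervalIntegrable (by rwa [uIcc_of_le hL.le])
  have hcG : ∀ (a b : ℝ) (v v' u u' : ℝ → ℝ), SSol p a b lam 0 L v v' →
      (∀ t ∈ Icc (0:ℝ) L, 0 < v t) → C1On 0 L u u' → ContinuousOn
      (fun t => asymFlux p a b (v' t) * (v t) ^ (1 - p) * (max (u t) 0) ^ p) (Icc 0 L) := by
    intro a b v v' u u' hv hvp hu
    refine (hv.2.continuousOn.mul ?_).mul ?_
    · exact hv.1.continuousOn.rpow_const (fun t ht => Or.inl (hvp t ht).ne')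
    · exact ((continuous_id.max continuous_const).comp_continuousOn hu.continuousOn).rpow_const (fun t ht => Or.inr hp0.le)
  set G : ℝ → ℝ := fun t => asymFlux p a b (v' t) * (v t) ^ (1 - p) * (max (u t) 0) ^ p +
    asymFlux p b a (z' t) * (z t) ^ (1 - p) * (max (-u t) 0) ^ p with hG
  have hGc : ContinuousOn G (Icc 0 L) :=
    (hcG a b v v' u u' hv hvp hu.1).add (hcG b a z z' _ _ hz hzp hu.1.neg)
  have hex : ∀ t ∈ Ioo (0:ℝ) L, ∃ d, HasDerivAt G d t ∧
      d ≤ asymE p a b (u' t) - lam * |u t| ^ p := by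
    intro t ht
    obtain ⟨d1, h1, h1'⟩ := picone_half hp ha hb hv hvp hu.1 ht
    obtain ⟨d2, h2, h2'⟩ := picone_half hp hb ha hz hzp hu.1.neg ht
    refine ⟨d1 + d2, h1.add h2, ?_⟩
    rw [asymE_neg] at h2'
    rcases lt_trichotomy (u t) 0 with h | h | h
    · rw [if_neg (by linarith)] at h1'
      rw [if_pos (by linarith)] at h2'
      rw [abs_of_neg h]
      linarith
    · rw [if_neg (by linarith)] at h1'
      rw [if_neg (by linarith)] at h2'
      rw [h, abs_zero, Real.zero_rpow hp0.ne']
      have := asymE_nonneg p a b (u' t) ha hb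
      linarith
    · rw [if_pos (by linarith)] at h1'
      rw [if_neg (by linarith)] at h2'
      rw [abs_of_pos h]
      linarith
  have hex' : ∀ t, ∃ d, t ∈ Ioo (0:ℝ) L → HasDerivAt G d t ∧
      d ≤ asymE p a b (u' t) - lam * |u t| ^ p := by
    intro t
    by_cases ht : t ∈ Ioo (0:ℝ) L
    · obtain ⟨d, hd⟩ := hex t ht
      exact ⟨d, fun _ => hd⟩
    · exact ⟨0, fun h => (ht h).elim⟩
  choose G' hG' using hex'
  have c1 : ContinuousOn (fun t => asymE p a b (u' t)) (Icc 0 L) :=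
    (asymE_continuous p a b hp).comp_continuousOn hu.1.2
  have c2 : ContinuousOn (fun t => lam * |u t| ^ p) (Icc 0 L) :=
    continuousOn_const.mul (hu.1.continuousOn.abs.rpow_const (fun _ _ => Or.inr hp0.le))
  have key := intervalIntegral.sub_le_integral_of_hasDeriv_right_of_le hL.le hGc
    (fun t ht => (hG' t ht).1.hasDerivWithinAt)
    ((c1.sub c2).integrableOn_Icc) (fun t ht => (hG' t ht).2)
  have g0 : G 0 = 0 := by simp [hG, hu.2.1, Real.zero_rpow hp0.ne']
  have gL : G L = 0 := by simp [hG, hu.2.2, Real.zero_rpow hp0.ne']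
  rw [g0, gL, sub_zero] at key
  have e : (∫ t in (0:ℝ)..L, (asymE p a b (u' t) - lam * |u t| ^ p)) =
      (∫ t in (0:ℝ)..L, asymE p a b (u' t)) - lam * ∫ t in (0:ℝ)..L, |u t| ^ p := by
    rw [intervalIntegral.integral_sub (hci _ c1) (hci _ c2), intervalIntegral.integral_const_mul]
  have key' : 0 ≤ ∫ t in (0:ℝ)..L, (asymE p a b (u' t) - lam * |u t| ^ p) := key
  rw [e] at key'
  linarith

lemma exists_pos_sol {p a b L L' : ℝ} (hp : 1 < p) (ha : 0 < a) (hb : 0 < b) (hL : 0 < L)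
    (hLL : L < L') : ∃ v v' : ℝ → ℝ, SSol p a b ((p - 1) * ((a + b) * A1 p / L') ^ p) 0 L v v' ∧
      ∀ t ∈ Icc (0:ℝ) L, 0 < v t := by
  have hA := A1_pos hp
  have hL' : 0 < L' := hL.trans hLL
  have hκ : 0 < (a + b) * A1 p / L' := by positivity
  obtain ⟨v, v', hv, -, -, -, -, hpos⟩ := exists_bump hp ha hb hκ
  have e : (a + b) * A1 p / ((a + b) * A1 p / L') = L' := by field_simp
  rw [e] at hv hpos
  refine ⟨_, _, (hv.shift (-((L' - L) / 2))).mono (by linarith) (by linarith), ?_⟩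
  intro t ht
  exact hpos _ ⟨by linarith [ht.1], by linarith [ht.2]⟩

lemma lower_bound {p a b L : ℝ} {u u' : ℝ → ℝ} (hp : 1 < p) (ha : 0 < a) (hb : 0 < b) (hL : 0 < L)
    (hu : Adm L u u') (h1 : (∫ t in (0:ℝ)..L, |u t| ^ p) = 1) :
    (p - 1) * ((a + b) * A1 p / L) ^ p ≤ ∫ t in (0:ℝ)..L, asymE p a b (u' t) := by
  have hA := A1_pos hp
  have hle : ∀ L' ∈ Ioi L, (p - 1) * ((a + b) * A1 p / L') ^ p ≤
      ∫ t in (0:ℝ)..L, asymE p a b (u' t) := by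
    intro L' hL'
    obtain ⟨v, v', hv, hvp⟩ := exists_pos_sol hp ha hb hL hL'
    obtain ⟨z, z', hz, hzp⟩ := exists_pos_sol hp hb ha hL hL'
    rw [add_comm b a] at hz
    have := picone hp ha hb hL hv hvp hz hzp hu
    rwa [h1, mul_one] at this
  have hc : ContinuousAt (fun L' : ℝ => (p - 1) * ((a + b) * A1 p / L') ^ p) L := by
    refine continuousAt_const.mul (ContinuousAt.rpow_const ?_ (Or.inr (by linarith)))
    exact continuousAt_const.div continuousAt_id hL.ne'
  refine le_of_tendsto (hc.continuousWithinAt (s := Ioi L)) ?_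
  filter_upwards [self_mem_nhdsWithin] with x hx
  exact hle x hx

lemma lam1_eq {p a b L : ℝ} (hp : 1 < p) (ha : 0 < a) (hb : 0 < b) (hL : 0 < L) :
    lam1 p a b L = (p - 1) * ((a + b) * A1 p / L) ^ p := by
  have hp0 : p ≠ 0 := by linarith
  refine IsLeast.csInf_eq ⟨?_, ?_⟩
  · obtain ⟨u, u', hw, hne⟩ := exists_eig hp ha hb hL 1 one_pos
    have ht := weak_test hp hw
    have hN := eig_norm_pos hp hL hw.1.1 hne
    rw [Nat.cast_one, Real.one_rpow, one_mul] at ht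
    set N := ∫ t in (0:ℝ)..L, |u t| ^ p
    set c := N ^ (-(1 / p)) with hc
    have hc0 : 0 < c := by positivity
    have hcp : c ^ p = N⁻¹ := by
      rw [hc, ← Real.rpow_mul hN.le, neg_mul, one_div_mul_cancel hp0, Real.rpow_neg_one]
    refine ⟨fun t => c * u t, fun t => c * u' t, ⟨⟨fun t ht => (hw.1.1.1 t ht).const_mul c,
      continuousOn_const.mul hw.1.1.2⟩, by simp [hw.1.2.1], by simp [hw.1.2.2]⟩, ?_, ?_⟩
    · have e : ∀ t, |c * u t| ^ p = c ^ p * |u t| ^ p := fun t => by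
        rw [abs_mul, abs_of_pos hc0, Real.mul_rpow hc0.le (abs_nonneg _)]
      simp only [e]
      rw [intervalIntegral.integral_const_mul, hcp]
      exact inv_mul_cancel₀ hN.ne'
    · simp only [asymE_smul p a b c _ hc0.le]
      rw [intervalIntegral.integral_const_mul, hcp, ht]
      field_simp
  · rintro E ⟨u, u', hu, h1, rfl⟩
    exact lower_bound hp ha hb hL hu h1

lemma eig_iff {p a b L : ℝ} (lam : ℝ) (hp : 1 < p) (ha : 0 < a) (hb : 0 < b) (hL : 0 < L) :
    DirichletEig p a b L lam ↔
      ∃ k : ℕ, 0 < k ∧ lam = (k : ℝ) ^ p * ((p - 1) * ((a + b) * A1 p / L) ^ p) := by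
  refine ⟨eig_form hp ha hb hL, ?_⟩
  rintro ⟨k, hk, rfl⟩
  exact exists_eig hp ha hb hL k hk

theorem stmt17 (p a b L : ℝ) (hp : 1 < p) (ha : 0 < a) (hb : 0 < b) (hL : 0 < L)
    (lam : ℝ) :
    (DirichletEig p a b L lam ↔ ∃ k : ℕ, 0 < k ∧ lam = (k : ℝ) ^ p * lam1 p a b L) ∧
    (DirichletEig p a b L lam ↔ DirichletEig p 1 1 L ((2 / (a + b)) ^ p * lam)) := by
  refine ⟨by rw [eig_iff lam hp ha hb hL, lam1_eq hp ha hb hL], ?_⟩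
  rw [eig_iff lam hp ha hb hL, eig_iff _ hp one_pos one_pos hL]
  refine exists_congr fun k => and_congr_right fun _ => ?_
  have hA := A1_pos hp
  have e : (a + b) * A1 p / L = (a + b) / 2 * ((1 + 1) * A1 p / L) := by ring
  have hX : 0 < (2 / (a + b)) ^ p := by positivity
  have e2 : (2 / (a + b)) ^ p * ((a + b) / 2) ^ p = 1 := by
    rw [← Real.mul_rpow (by positivity) (by positivity)]
    have : 2 / (a + b) * ((a + b) / 2) = 1 := by field_simp
    rw [this, Real.one_rpow]
  rw [e, Real.mul_rpow (by positivity) (by positivity)]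
  constructor
  · intro h
    rw [h]
    linear_combination (k : ℝ) ^ p * (p - 1) * ((1 + 1) * A1 p / L) ^ p * e2
  · intro h
    refine mul_left_cancel₀ hX.ne' ?_
    rw [h]
    linear_combination -((k : ℝ) ^ p * (p - 1) * ((1 + 1) * A1 p / L) ^ p) * e2
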